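/- Let w ∈ I(S_n) be an involution with connected components C_1, …, C_k. Then w is Boolean if and only if the restriction w_{C_i} is Boolean for every i ∈ [k]. -/

import Mathlib

/-!
The connected components of an involution `w` are intervals, and `w` preserves each of them
(`connected_convex`, `connected_apply`), so `w` is a direct sum of its restrictions. An elementary
Bruhat step below a permutation preserving a family of intervals multiplies by a transposition
inside one interval (`Step.block_eq`). Hence everything below `w` preserves the components too,
and for permutations preserving the components the Bruhat order is the product of the Bruhat orders
of the restrictions (`bruhatLE_iff_res`). Since involutions restrict and glue to involutions,
the ideal `B(w)` is the product of the ideals `B(w_C)`.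

If all factors are Boolean lattices, so is the product. Conversely, the identity is
the minimum of the Bruhat order, so `w_C ≤ w`; thus `B(w_C)` is a principal ideal of `B(w)`, and
principal ideals of Boolean lattices are Boolean.
-/


/-- The number of inversions of a permutation. -/
def invCount {n : ℕ} (π : Equiv.Perm (Fin n)) : ℕ :=
  (Finset.univ.filter fun p : Fin n × Fin n => p.1 < p.2 ∧ π p.2 < π p.1).card

/-- `w` is an involution: an element of order at most two. -/
def IsInvolution {n : ℕ} (w : Equiv.Perm (Fin n)) : Prop := w * w = 1

/-- A transposition in the symmetric group. -/
def IsTransposition {n : ℕ} (t : Equiv.Perm (Fin n)) : Prop :=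
  ∃ i j : Fin n, i ≠ j ∧ t = Equiv.swap i j

/-- The Bruhat order on the symmetric group: `u ≤ w` iff `w = u * t₁ * ⋯ * tₘ` for
transpositions `t₁, …, tₘ` such that the number of inversions strictly increases
along the partial products `u * t₁ * ⋯ * tᵢ`. -/
def BruhatLE {n : ℕ} (u w : Equiv.Perm (Fin n)) : Prop :=
  ∃ ts : List (Equiv.Perm (Fin n)),
    (∀ t ∈ ts, IsTransposition t) ∧
    w = ts.foldl (· * ·) u ∧
    ∀ k, k + 1 ≤ ts.length →
      invCount ((ts.take k).foldl (· * ·) u) < invCount ((ts.take (k + 1)).foldl (· * ·) u)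

/-- An involution `w` is Boolean if the principal order ideal
`B(w) = {u ∈ I(Sₙ) : u ≤ w}` of the Bruhat order on involutions is isomorphic,
as a poset, to the Boolean lattice of all subsets of some finite set. -/
def IsBooleanInvolution {n : ℕ} (w : Equiv.Perm (Fin n)) : Prop :=
  ∃ (m : ℕ) (f : {u : Equiv.Perm (Fin n) // IsInvolution u ∧ BruhatLE u w} ≃ Finset (Fin m)),
    ∀ a b, BruhatLE a.1 b.1 ↔ f a ⊆ f b

/-- One step of the connectedness relation: positions `a` and `b` satisfy
`sgn(a - b) = -sgn(w a - w b)`. -/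
def CrossStep {n : ℕ} (w : Equiv.Perm (Fin n)) (a b : Fin n) : Prop :=
  Int.sign ((a : ℕ) - (b : ℕ) : ℤ) = - Int.sign ((w a : ℕ) - (w b : ℕ) : ℤ)

/-- Positions `i` and `j` are connected in `w` if there is a sequence
`i = i₀, i₁, …, i_k = j` with `sgn(i_{l-1} - i_l) = -sgn(w i_{l-1} - w i_l)`
for all `l ∈ [k]`. -/
def Connected {n : ℕ} (w : Equiv.Perm (Fin n)) : Fin n → Fin n → Prop :=
  Relation.ReflTransGen (CrossStep w)

open Relation

/-! ### Elementary Bruhat steps -/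

/-- `w` is obtained from `u` by exchanging the values at two positions `i < j` that are not an
inversion of `u`. -/
def Step {n : ℕ} (u w : Equiv.Perm (Fin n)) : Prop :=
  ∃ i j : Fin n, i < j ∧ u i < u j ∧ w = u * Equiv.swap i j

/-- With `t = swap i j`, inversions of `v` that are no longer inversions of `v * t` are moved by
`t`; this embeds the inversions of `v` into those of `v * t` and misses `(i, j)`. -/
lemma invCount_lt_swap {n : ℕ} (v : Equiv.Perm (Fin n)) {i j : Fin n} (hij : i < j)
    (hv : v i < v j) : invCount v < invCount (v * Equiv.swap i j) := by
  set t := Equiv.swap i j with ht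
  have htt : ∀ x, t (t x) = x := fun x => Equiv.swap_apply_self i j x
  have hti : t i = j := Equiv.swap_apply_left i j
  have htj : t j = i := Equiv.swap_apply_right i j
  have hto : ∀ x, x ≠ i → x ≠ j → t x = x := fun x h1 h2 => Equiv.swap_apply_of_ne_of_ne h1 h2
  let f : Fin n × Fin n → Fin n × Fin n :=
    fun p => if v (t p.2) < v (t p.1) then p else (t p.1, t p.2)
  have hkey : ∀ p q, p < q → v q < v p → ¬ v (t q) < v (t p) → t p < t q := by
    intro p q hpq hvpq hn
    by_cases p = i <;> by_cases p = j <;> by_cases q = i <;> by_cases q = j <;> grind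
  unfold invCount
  rw [← Finset.card_image_of_injOn (f := f)]
  · apply Finset.card_lt_card
    rw [Finset.ssubset_iff_of_subset]
    · refine ⟨(i, j), Finset.mem_filter.2 ⟨Finset.mem_univ _, hij, by simpa [hti, htj] using hv⟩, ?_⟩
      simp only [Finset.mem_image, Finset.mem_filter, Finset.mem_univ, true_and, not_exists, f]
      rintro ⟨p, q⟩ ⟨⟨h1, h2⟩, h3⟩
      grind
    · intro x hx
      simp only [Finset.mem_image, Finset.mem_filter, Finset.mem_univ, true_and, f] at hx
      obtain ⟨⟨p, q⟩, ⟨h1, h2⟩, rfl⟩ := hx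
      refine Finset.mem_filter.2 ⟨Finset.mem_univ _, ?_⟩
      split_ifs with h
      · exact ⟨h1, h⟩
      · exact ⟨hkey p q h1 h2 h, by simpa [htt] using h2⟩
  · rintro ⟨p, q⟩ h ⟨p', q'⟩ h' he
    simp only [Finset.coe_filter, Finset.mem_univ, true_and, Set.mem_ofPred_eq] at h h'
    simp only [f] at he
    grind

lemma Step.invCount_lt {n : ℕ} {u w : Equiv.Perm (Fin n)} (h : Step u w) :
    invCount u < invCount w := by
  obtain ⟨i, j, hij, hu, rfl⟩ := h
  exact invCount_lt_swap u hij hu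

lemma step_of_transposition {n : ℕ} {u t : Equiv.Perm (Fin n)} (ht : IsTransposition t)
    (h : invCount u < invCount (u * t)) : Step u (u * t) := by
  have main : ∀ i j : Fin n, i < j → invCount u < invCount (u * Equiv.swap i j) →
      Step u (u * Equiv.swap i j) := by
    intro i j hij h
    refine ⟨i, j, hij, ?_, rfl⟩
    by_contra hn
    have hne : u i ≠ u j := fun e => hij.ne (u.injective e)
    have := invCount_lt_swap (u * Equiv.swap i j) hij (by simpa using by grind)
    rw [mul_assoc, Equiv.swap_mul_self, mul_one] at this
    omega
  obtain ⟨i, j, hne, rfl⟩ := ht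
  rcases lt_or_gt_of_ne hne with hij | hij
  · exact main i j hij h
  · rw [Equiv.swap_comm] at h ⊢
    exact main j i hij h

lemma bruhatLE_iff {n : ℕ} {u w : Equiv.Perm (Fin n)} :
    BruhatLE u w ↔ ReflTransGen Step u w := by
  constructor
  · rintro ⟨ts, hts, rfl, hk⟩
    induction ts generalizing u with
    | nil => exact .refl
    | cons t ts ih =>
      have h0 := hk 0 (by simp)
      simp only [List.take_zero, List.foldl_nil, List.take_succ_cons, List.foldl_cons] at h0
      refine .head (step_of_transposition (hts t (by simp)) h0) ?_
      refine ih (fun s hs => hts s (by simp [hs])) fun k hkl => ?_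
      simpa using hk (k + 1) (by simpa using hkl)
  · intro h
    induction h using ReflTransGen.head_induction_on with
    | refl => exact ⟨[], by simp, rfl, by simp⟩
    | head hs _ ih =>
      obtain ⟨ts, hts, hw, hk⟩ := ih
      have hlt := hs.invCount_lt
      obtain ⟨i, j, hij, hu, rfl⟩ := hs
      refine ⟨Equiv.swap i j :: ts, ?_, by simpa using hw, ?_⟩
      · intro t ht
        rcases List.mem_cons.1 ht with rfl | ht
        · exact ⟨i, j, hij.ne, rfl⟩
        · exact hts t ht
      · rintro (_ | k) hkl
        · simpa using hlt
        · simpa using hk k (by simpa using hkl)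

lemma BruhatLE.trans {n : ℕ} {u v w : Equiv.Perm (Fin n)} (h : BruhatLE u v)
    (h' : BruhatLE v w) : BruhatLE u w :=
  bruhatLE_iff.2 ((bruhatLE_iff.1 h).trans (bruhatLE_iff.1 h'))

lemma BruhatLE.refl {n : ℕ} (u : Equiv.Perm (Fin n)) : BruhatLE u u :=
  bruhatLE_iff.2 .refl

lemma BruhatLE.antisymm {n : ℕ} {u v : Equiv.Perm (Fin n)} (h : BruhatLE u v)
    (h' : BruhatLE v u) : u = v := by
  have key : ∀ {a b : Equiv.Perm (Fin n)}, ReflTransGen Step a b → invCount a ≤ invCount b := by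
    intro a b hab
    induction hab with
    | refl => exact le_rfl
    | tail _ hs ih => exact ih.trans hs.invCount_lt.le
  rcases ReflTransGen.cases_head (bruhatLE_iff.1 h) with e | ⟨c, hc, hcv⟩
  · exact e
  · have h1 := hc.invCount_lt
    have h2 := key hcv
    have h3 := key (bruhatLE_iff.1 h')
    omega

/-- The identity is the minimum of the Bruhat order: every other permutation has an inversion,
and undoing it is a step down. -/
lemma one_bruhatLE {n : ℕ} (v : Equiv.Perm (Fin n)) : BruhatLE 1 v := by
  rw [bruhatLE_iff]
  induction hm : invCount v using Nat.strong_induction_on generalizing v with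
  | _ m ih =>
    by_cases hv : StrictMono v
    · have : v = 1 := by
        let e : Fin n ≃o Fin n := ⟨v, hv.le_iff_le⟩
        have he : e = OrderIso.refl _ := Subsingleton.elim _ _
        ext a
        exact congrArg (fun g : Fin n ≃o Fin n => (g a).val) he
      rw [this]
    · obtain ⟨i, j, hij, hji⟩ : ∃ i j, i < j ∧ v j ≤ v i := by
        simpa [StrictMono] using hv
      have hlt : v j < v i := lt_of_le_of_ne hji fun e => hij.ne' (v.injective e)
      have hs : Step (v * Equiv.swap i j) v :=
        ⟨i, j, hij, by simpa using hlt, by rw [mul_assoc, Equiv.swap_mul_self, mul_one]⟩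
      exact .tail (ih _ (hm ▸ hs.invCount_lt) _ rfl) hs

/-! ### Permutations preserving a partition into intervals -/

/-- The fibres of `β` are intervals. -/
def ConvexFibres {n k : ℕ} (β : Fin n → Fin k) : Prop :=
  ∀ a b c, a ≤ b → b ≤ c → β a = β c → β b = β a

/-- `u` preserves each fibre of `β`. -/
def Preserves {n k : ℕ} (β : Fin n → Fin k) (u : Equiv.Perm (Fin n)) : Prop :=
  ∀ a, β (u a) = β a

lemma Preserves.inv {n k : ℕ} {β : Fin n → Fin k} {u : Equiv.Perm (Fin n)}
    (h : Preserves β u) : Preserves β u⁻¹ := fun a => by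
  have := h (u⁻¹ a)
  simpa using this.symm

/-- Both positions exchanged by a step into a permutation preserving the intervals lie in the same
interval, since they form an inversion of the larger permutation. -/
lemma Step.block_eq {n k : ℕ} {β : Fin n → Fin k} (hβ : ConvexFibres β)
    {u : Equiv.Perm (Fin n)} {i j : Fin n} (hij : i < j) (hu : u i < u j)
    (hw : Preserves β (u * Equiv.swap i j)) : β i = β j := by
  have h1 : β (u j) = β i := by simpa using hw i
  have h2 : β (u i) = β j := by simpa using hw j
  rcases le_or_gt (u i) i with h | h
  · have := hβ (u i) i j h hij.le h2
    rw [this, h2]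
  · have := hβ i (u i) (u j) h.le hu.le h1.symm
    rw [← h2, this]

lemma Step.preserves {n k : ℕ} {β : Fin n → Fin k} (hβ : ConvexFibres β)
    {u w : Equiv.Perm (Fin n)} (h : Step u w) (hw : Preserves β w) : Preserves β u := by
  obtain ⟨i, j, hij, hu, rfl⟩ := h
  have he := Step.block_eq hβ hij hu hw
  intro a
  have := hw (Equiv.swap i j a)
  rw [Equiv.Perm.mul_apply, Equiv.swap_apply_self] at this
  rw [this, Equiv.swap_apply_def]
  grind

lemma BruhatLE.preserves {n k : ℕ} {β : Fin n → Fin k} (hβ : ConvexFibres β)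
    {u w : Equiv.Perm (Fin n)} (h : BruhatLE u w) (hw : Preserves β w) : Preserves β u := by
  rw [bruhatLE_iff] at h
  induction h using ReflTransGen.head_induction_on with
  | refl => exact hw
  | head hs _ ih => exact hs.preserves hβ ih

/-- The restriction of `u` to the fibre of `β` over `b`, extended by the identity. -/
def res {n k : ℕ} (β : Fin n → Fin k) (b : Fin k) (u : Equiv.Perm (Fin n))
    (h : Preserves β u) : Equiv.Perm (Fin n) where
  toFun a := if β a = b then u a else a
  invFun a := if β a = b then u⁻¹ a else a
  left_inv a := by
    have := h a
    by_cases hb : β a = b <;> simp_all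
  right_inv a := by
    have := h.inv a
    by_cases hb : β a = b <;> simp_all

lemma res_apply {n k : ℕ} {β : Fin n → Fin k} (b : Fin k) {u : Equiv.Perm (Fin n)}
    (h : Preserves β u) (a : Fin n) : res β b u h a = if β a = b then u a else a := rfl

lemma res_preserves {n k : ℕ} {β : Fin n → Fin k} (b : Fin k) {u : Equiv.Perm (Fin n)}
    (h : Preserves β u) : Preserves β (res β b u h) := fun a => by
  rw [res_apply]
  split_ifs
  · exact h a
  · rfl

lemma involution_iff {n : ℕ} {u : Equiv.Perm (Fin n)} :
    IsInvolution u ↔ ∀ a, u (u a) = a := by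
  simp [IsInvolution, Equiv.ext_iff]

lemma res_involution {n k : ℕ} {β : Fin n → Fin k} (b : Fin k) {u : Equiv.Perm (Fin n)}
    (h : Preserves β u) (hu : IsInvolution u) : IsInvolution (res β b u h) := by
  rw [involution_iff] at hu ⊢
  intro a
  have := h a
  simp only [res_apply]
  grind

lemma Step.res {n k : ℕ} {β : Fin n → Fin k} (hβ : ConvexFibres β) (b : Fin k)
    {u w : Equiv.Perm (Fin n)} (h : Step u w) (hu : Preserves β u) (hw : Preserves β w) :
    ReflTransGen Step (res β b u hu) (res β b w hw) := by
  obtain ⟨i, j, hij, hlt, rfl⟩ := h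
  have he := Step.block_eq hβ hij hlt hw
  by_cases hb : β i = b
  · refine .single ⟨i, j, hij, by simpa [res_apply, hb, ← he] using hlt, ?_⟩
    ext a
    simp only [res_apply, Equiv.Perm.mul_apply, Equiv.swap_apply_def]
    grind
  · have : _root_.res β b (u * Equiv.swap i j) hw = _root_.res β b u hu := by
      ext a
      simp only [res_apply, Equiv.Perm.mul_apply, Equiv.swap_apply_def]
      grind
    rw [this]

lemma BruhatLE.res {n k : ℕ} {β : Fin n → Fin k} (hβ : ConvexFibres β) (b : Fin k)
    {u w : Equiv.Perm (Fin n)} (h : BruhatLE u w) (hu : Preserves β u) (hw : Preserves β w) :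
    BruhatLE (res β b u hu) (res β b w hw) := by
  rw [bruhatLE_iff] at h ⊢
  induction h using ReflTransGen.head_induction_on with
  | refl => exact .refl
  | head hs hr ih =>
    have hc := BruhatLE.preserves hβ (bruhatLE_iff.2 hr) hw
    exact (hs.res hβ b hu hc).trans (ih hc)

/-- Left multiplication by a permutation fixing one interval pointwise is monotone on the
permutations supported on that interval. -/
lemma mul_bruhatLE_mul {n k : ℕ} {β : Fin n → Fin k} (hβ : ConvexFibres β) (b : Fin k)
    {x r r' : Equiv.Perm (Fin n)} (hx : ∀ a, β a = b → x a = a)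
    (hr' : Preserves β r') (hs : ∀ a, β a ≠ b → r' a = a) (h : BruhatLE r r') :
    BruhatLE (x * r) (x * r') := by
  rw [bruhatLE_iff] at h ⊢
  suffices ReflTransGen Step (x * r) (x * r') ∧ Preserves β r ∧ ∀ a, β a ≠ b → r a = a from this.1
  induction h using ReflTransGen.head_induction_on with
  | refl => exact ⟨.refl, hr', hs⟩
  | head hst _ ih =>
    obtain ⟨ih, hp, hid⟩ := ih
    have hu := hst.preserves hβ hp
    obtain ⟨i, j, hij, hlt, rfl⟩ := hst
    have he := Step.block_eq hβ hij hlt hp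
    -- Outside the interval over `b` the larger permutation has no inversion to undo.
    have hb : β i = b := by
      by_contra hb
      have h1 := hid i hb
      have h2 := hid j (he ▸ hb)
      simp only [Equiv.Perm.mul_apply, Equiv.swap_apply_left, Equiv.swap_apply_right] at h1 h2
      rw [h1, h2] at hlt
      exact lt_asymm hij hlt
    refine ⟨.head ⟨i, j, hij, ?_, by rw [mul_assoc]⟩ ih, hu, fun a ha => ?_⟩
    · simpa [hx _ ((hu i).trans hb), hx _ ((hu j).trans (he ▸ hb))] using hlt
    · have := hid a ha
      rwa [Equiv.Perm.mul_apply, Equiv.swap_apply_of_ne_of_ne] at this <;> grind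

/-- On permutations preserving the intervals, the Bruhat order is the product of the Bruhat orders
of the restrictions. -/
lemma bruhatLE_iff_res {n k : ℕ} {β : Fin n → Fin k} (hβ : ConvexFibres β)
    {u w : Equiv.Perm (Fin n)} (hu : Preserves β u) (hw : Preserves β w) :
    BruhatLE u w ↔ ∀ b, BruhatLE (res β b u hu) (res β b w hw) := by
  refine ⟨fun h b => h.res hβ b hu hw, fun h => ?_⟩
  -- The restrictions of `u` are replaced by those of `w`, one interval after another.
  suffices ∀ (S : Finset (Fin k)) (u : Equiv.Perm (Fin n)) (hu : Preserves β u),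
      (∀ b, BruhatLE (res β b u hu) (res β b w hw)) → (∀ a, β a ∉ S → u a = w a) →
      BruhatLE u w from this Finset.univ u hu h (by simp)
  clear h hu u
  intro S
  induction S using Finset.induction_on with
  | empty =>
    intro u _ _ h
    rw [Equiv.ext (f := u) (g := w) fun a => h a (by simp)]
    exact .refl w
  | insert b S hb ih =>
    intro u hu h hS
    set r := res β b u hu with hr
    set s := res β b w hw with hsdef
    have hinv : ∀ a, r.symm a = if β a = b then u.symm a else a := fun a => rfl
    have hx : ∀ a, β a = b → (u * r⁻¹) a = a := fun a ha => by simp [hinv, ha]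
    have hval : ∀ a, (u * r⁻¹ * s) a = if β a = b then w a else u a := by
      intro a
      have := hw a
      by_cases ha : β a = b
      · simp [hinv, hsdef, res_apply, ha, this]
      · simp [hinv, hsdef, res_apply, ha]
    have hle := mul_bruhatLE_mul hβ b hx (res_preserves b hw)
      (fun a ha => by simp [res_apply, ha]) (h b)
    rw [← hr, ← hsdef, inv_mul_cancel_right] at hle
    have hu' : Preserves β (u * r⁻¹ * s) := fun a => by
      rw [hval]
      split_ifs
      · exact hw a
      · exact hu a
    refine hle.trans (ih _ hu' (fun c => ?_) fun a ha => ?_)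
    · by_cases hc : c = b
      · subst hc
        have : res β c (u * r⁻¹ * s) hu' = s := by
          ext a
          rw [res_apply, hsdef, res_apply, hval]
          grind
        rw [this]
        exact .refl _
      · have : res β c (u * r⁻¹ * s) hu' = res β c u hu := by
          ext a
          rw [res_apply, res_apply, hval]
          grind
        rw [this]
        exact h c
    · rw [hval]
      split_ifs with hab
      · rfl
      · exact hS a (by simp [hab, ha])

/-! ### Boolean ideals -/

/-- A surjection of the ideal onto the subsets of a finite type that preserves and reflects order is
injective by antisymmetry, so it witnesses
that `w` is Boolean. -/
lemma isBoolean_of_surjective {n : ℕ} {w : Equiv.Perm (Fin n)} {α : Type*} [Fintype α]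
    (g : {u : Equiv.Perm (Fin n) // IsInvolution u ∧ BruhatLE u w} → Finset α)
    (hg : ∀ a b, BruhatLE a.1 b.1 ↔ g a ⊆ g b) (hs : Function.Surjective g) :
    IsBooleanInvolution w := by
  have hi : Function.Injective g := fun a b hab =>
    Subtype.ext (((hg a b).2 hab.le).antisymm ((hg b a).2 hab.ge))
  refine ⟨Fintype.card α, (Equiv.ofBijective g ⟨hi, hs⟩).trans
    (Equiv.finsetCongr (Fintype.equivFin α)), fun a b => ?_⟩
  rw [hg]
  simp only [Equiv.trans_apply, Equiv.finsetCongr_apply, Finset.map_subset_map]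
  rfl

/-- A principal ideal of a Boolean lattice is Boolean. -/
lemma IsBooleanInvolution.of_le {n : ℕ} {v w : Equiv.Perm (Fin n)} (hw : IsBooleanInvolution w)
    (hv : IsInvolution v) (hvw : BruhatLE v w) : IsBooleanInvolution v := by
  classical
  obtain ⟨m, f, hf⟩ := hw
  set T := f ⟨v, hv, hvw⟩ with hT
  let ι : {u : Equiv.Perm (Fin n) // IsInvolution u ∧ BruhatLE u v} →
      {u : Equiv.Perm (Fin n) // IsInvolution u ∧ BruhatLE u w} :=
    fun u => ⟨u.1, u.2.1, u.2.2.trans hvw⟩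
  have hι : ∀ u, f (ι u) ⊆ T := fun u => (hf (ι u) _).1 u.2.2
  refine isBoolean_of_surjective (α := T) (fun u => (f (ι u)).subtype (· ∈ T)) ?_ ?_
  · intro a b
    refine (hf (ι a) (ι b)).trans ⟨fun h x hx => ?_, fun h x hx => ?_⟩
    · simp only [Finset.mem_subtype] at hx ⊢
      exact h hx
    · have := @h ⟨x, hι a hx⟩ (by simpa using hx)
      simpa using this
  · intro S
    let S' : Finset (Fin m) := S.map (Function.Embedding.subtype _)
    have hS' : S' ⊆ T := fun x hx => by
      simp only [S', Finset.mem_map] at hx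
      obtain ⟨y, _, rfl⟩ := hx
      exact y.2
    have hle : BruhatLE (f.symm S').1 v :=
      (hf (f.symm S') ⟨v, hv, hvw⟩).2 (by simpa using hS')
    refine ⟨⟨(f.symm S').1, (f.symm S').2.1, hle⟩, ?_⟩
    have : f (ι ⟨(f.symm S').1, (f.symm S').2.1, hle⟩) = S' := f.apply_symm_apply S'
    ext x
    rw [Finset.mem_subtype, this]
    simp [S']

/-- The permutation that acts on the fibre over `b` as `v b`. -/
def glue {n k : ℕ} (β : Fin n → Fin k) (v : Fin k → Equiv.Perm (Fin n))
    (h : ∀ b, Preserves β (v b)) : Equiv.Perm (Fin n) where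
  toFun a := v (β a) a
  invFun a := (v (β a))⁻¹ a
  left_inv a := by simp [h _ a]
  right_inv a := by
    have := (h (β a)).inv a
    simp_all

/-- If the restriction of `w` to every interval is Boolean, then so is `w`: its ideal is the
product of the ideals of the restrictions. -/
lemma isBoolean_of_res {n k : ℕ} {β : Fin n → Fin k} (hβ : ConvexFibres β)
    {w : Equiv.Perm (Fin n)} (hw : Preserves β w)
    (h : ∀ b, IsBooleanInvolution (res β b w hw)) : IsBooleanInvolution w := by
  choose m f hf using h
  have hp : ∀ u : {u : Equiv.Perm (Fin n) // IsInvolution u ∧ BruhatLE u w}, Preserves β u.1 :=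
    fun u => u.2.2.preserves hβ hw
  let ρ : ∀ b, {u : Equiv.Perm (Fin n) // IsInvolution u ∧ BruhatLE u w} →
      {u : Equiv.Perm (Fin n) // IsInvolution u ∧ BruhatLE u (res β b w hw)} :=
    fun b u => ⟨res β b u.1 (hp u), res_involution b _ u.2.1, u.2.2.res hβ b _ _⟩
  refine isBoolean_of_surjective (α := Σ b, Fin (m b))
    (fun u => Finset.univ.sigma fun b => f b (ρ b u)) ?_ ?_
  · intro u u'
    rw [bruhatLE_iff_res hβ (hp u) (hp u')]
    refine (forall_congr' fun b => hf b (ρ b u) (ρ b u')).trans ⟨fun h x hx => ?_, fun h b x hx => ?_⟩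
    · simp only [Finset.mem_sigma, Finset.mem_univ, true_and] at hx ⊢
      exact h _ hx
    · have := @h ⟨b, x⟩ (by simpa using hx)
      simpa using this
  · intro S
    let v : ∀ b, {u : Equiv.Perm (Fin n) // IsInvolution u ∧ BruhatLE u (res β b w hw)} :=
      fun b => (f b).symm (Finset.univ.filter fun x => (⟨b, x⟩ : Σ b, Fin (m b)) ∈ S)
    have hv : ∀ b, Preserves β (v b).1 := fun b => (v b).2.2.preserves hβ (res_preserves b hw)
    -- A permutation below one supported on an interval is supported there too: its restriction to
    -- any other interval lies below the identity.
    have hid : ∀ b a, β a ≠ b → (v b).1 a = a := by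
      intro b a ha
      have h1 := (v b).2.2.res hβ (β a) (hv b) (res_preserves b hw)
      have h2 : res β (β a) (res β b w hw) (res_preserves b hw) = 1 := by
        ext c
        simp only [res_apply, Equiv.Perm.one_apply]
        grind
      rw [h2] at h1
      have h3 := DFunLike.congr_fun (h1.antisymm (one_bruhatLE _)) a
      simpa [res_apply] using h3
    let u := glue β (fun b => (v b).1) hv
    have hu : Preserves β u := fun a => hv _ a
    have hres : ∀ b, res β b u hu = (v b).1 := by
      intro b
      ext a
      rw [res_apply]
      split_ifs with hb
      · subst hb
        rfl
      · rw [hid b a hb]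
    have hinv : IsInvolution u := by
      rw [involution_iff]
      intro a
      have h1 : u (u a) = (v (β (u a))).1 (u a) := rfl
      rw [h1, hu a]
      exact involution_iff.1 (v (β a)).2.1 a
    have hle : BruhatLE u w :=
      (bruhatLE_iff_res hβ hu hw).2 fun b => by rw [hres]; exact (v b).2.2
    refine ⟨⟨u, hinv, hle⟩, ?_⟩
    have hρ : ∀ b, ρ b ⟨u, hinv, hle⟩ = v b := fun b => Subtype.ext (hres b)
    ext ⟨b, x⟩
    simp [hρ, v]

/-- The restriction of `w` to one of the intervals lies below `w`. -/
lemma res_bruhatLE {n k : ℕ} {β : Fin n → Fin k} (hβ : ConvexFibres β)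
    {w : Equiv.Perm (Fin n)} (hw : Preserves β w) (b : Fin k) : BruhatLE (res β b w hw) w := by
  refine (bruhatLE_iff_res hβ (res_preserves b hw) hw).2 fun c => ?_
  by_cases hc : c = b
  · have : res β c (res β b w hw) (res_preserves b hw) = res β c w hw := by
      ext a
      simp only [res_apply]
      grind
    rw [this]
    exact .refl _
  · have : res β c (res β b w hw) (res_preserves b hw) = 1 := by
      ext a
      simp only [res_apply, Equiv.Perm.one_apply]
      grind
    rw [this]
    exact one_bruhatLE _

/-! ### Connected components -/

lemma crossStep_symm {n : ℕ} {w : Equiv.Perm (Fin n)} {a b : Fin n} (h : CrossStep w a b) :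
    CrossStep w b a := by
  unfold CrossStep at h ⊢
  rw [← neg_sub, Int.sign_neg, h, ← Int.sign_neg, neg_sub, ← Int.sign_neg, neg_sub]

lemma connected_symm {n : ℕ} {w : Equiv.Perm (Fin n)} {a b : Fin n} (h : Connected w a b) :
    Connected w b a := by
  induction h with
  | refl => exact .refl
  | tail _ hs ih => exact .head (crossStep_symm hs) ih

lemma crossStep_of_lt {n : ℕ} {w : Equiv.Perm (Fin n)} {a b : Fin n} (h : a < b)
    (h' : w b < w a) : CrossStep w a b := by
  unfold CrossStep
  rw [Int.sign_eq_neg_one_of_neg (by have := Fin.lt_def.1 h; omega),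
    Int.sign_eq_one_of_pos (by have := Fin.lt_def.1 h'; omega)]

lemma lt_of_crossStep {n : ℕ} {w : Equiv.Perm (Fin n)} {a b : Fin n} (h : a < b)
    (h' : CrossStep w a b) : w b < w a := by
  unfold CrossStep at h'
  rw [Int.sign_eq_neg_one_of_neg (by have := Fin.lt_def.1 h; omega), neg_inj] at h'
  have := Int.sign_eq_one_iff_pos.1 h'.symm
  exact Fin.lt_def.2 (by omega)

lemma connected_apply {n : ℕ} {w : Equiv.Perm (Fin n)} (hw : IsInvolution w) (a : Fin n) :
    Connected w a (w a) := by
  have haa := involution_iff.1 hw a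
  rcases lt_trichotomy a (w a) with h | h | h
  · exact .single (crossStep_of_lt h (by rwa [haa]))
  · rw [← h]; exact .refl
  · exact .single (crossStep_symm (crossStep_of_lt h (by rwa [haa])))

/-- Components are intervals: a path from `a` to `c` jumps over each intermediate `b` by some
inversion `(x, y)`, and then `(x, b)` or `(b, y)` is an inversion. -/
lemma connected_convex {n : ℕ} {w : Equiv.Perm (Fin n)} {a b c : Fin n} (h : Connected w a c)
    (hab : a ≤ b) (hbc : b ≤ c) : Connected w a b := by
  induction h using ReflTransGen.head_induction_on with
  | refl => rw [le_antisymm hab hbc]; exact .refl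
  | @head x y hxy _ ih =>
    rcases le_or_gt y b with hyb | hby
    · exact .head hxy (ih hyb)
    · rcases hab.eq_or_lt with rfl | hxb
      · exact .refl
      · rcases lt_or_ge (w b) (w x) with h | h
        · exact .single (crossStep_of_lt hxb h)
        · exact .tail (.single hxy) (crossStep_symm (crossStep_of_lt hby
            ((lt_of_crossStep (hxb.trans hby) hxy).trans_le h)))

/-- Let `w ∈ I(Sₙ)` be an involution with connected components `C 0, …, C (k-1)`
(the equivalence classes of the connectedness relation), and for each `i` let
`wr i` be the restriction of `w` to `C i` (agreeing with `w` on `C i` and with the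
identity elsewhere).  Then `w` is Boolean if and only if `wr i` is Boolean
for every `i`. -/
theorem boolean_iff_components_boolean {n k : ℕ} (w : Equiv.Perm (Fin n))
    (hw : IsInvolution w)
    (C : Fin k → Set (Fin n)) (hinj : Function.Injective C)
    (hC : ∀ c : Set (Fin n), (∃ i, C i = c) ↔ ∃ a : Fin n, c = {b | Connected w a b})
    (wr : Fin k → Equiv.Perm (Fin n))
    (hwr : ∀ (i : Fin k) (a : Fin n), (a ∈ C i → wr i a = w a) ∧ (a ∉ C i → wr i a = a)) :
    IsBooleanInvolution w ↔ ∀ i : Fin k, IsBooleanInvolution (wr i) := by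
  choose β hβC using fun a : Fin n => (hC {b | Connected w a b}).2 ⟨a, rfl⟩
  have hβ : ∀ a b, Connected w a b → β a = β b := by
    intro a b hab
    apply hinj
    rw [hβC, hβC]
    ext c
    exact ⟨fun h => (connected_symm hab).trans h, fun h => hab.trans h⟩
  have hβ' : ∀ a b, β a = β b → Connected w a b := by
    intro a b hab
    have : b ∈ C (β b) := by rw [hβC]; exact ReflTransGen.refl
    rw [← hab, hβC] at this
    exact this
  have hmem : ∀ i a, a ∈ C i ↔ β a = i := by
    intro i a
    obtain ⟨c, hc⟩ := (hC (C i)).1 ⟨i, rfl⟩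
    have hi : β c = i := hinj ((hβC c).trans hc.symm)
    rw [hc, ← hi]
    exact ⟨fun h => (hβ c a h).symm, fun h => hβ' c a h.symm⟩
  have hconv : ConvexFibres β := fun a b c hab hbc hac =>
    (hβ a b (connected_convex (hβ' a c hac) hab hbc)).symm
  have hpres : Preserves β w := fun a => (hβ a (w a) (connected_apply hw a)).symm
  have hres : ∀ i, wr i = res β i w hpres := by
    intro i
    ext a
    rw [res_apply]
    split_ifs with h
    · rw [(hwr i a).1 ((hmem i a).2 h)]
    · rw [(hwr i a).2 (mt (hmem i a).1 h)]
  simp only [hres]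
  exact ⟨fun h i => h.of_le (res_involution i hpres hw) (res_bruhatLE hconv hpres i),
    isBoolean_of_res hconv hpres⟩
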